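/- There do not exist polynomials σ₀, σ₁ ∈ ℝ[t], each expressible as a finite sum of squares of polynomials in ℝ[t], such that 1 − t = σ₀ + (1 − t)³ · σ₁ in ℝ[t]. (Consequently, the noncommutative polynomial f = 1 − x₁ cannot be written as Σᵢ sᵢ*sᵢ + Σⱼ vⱼ* f³ vⱼ with sᵢ, vⱼ ∈ ℂ⟨x₁⟩, even though D_{f³} = D_f is a free spectrahedron.) -/

import Mathlib

/-- A univariate real polynomial is a sum of squares. -/
def IsSumOfSquares (σ : Polynomial ℝ) : Prop :=
  ∃ (m : ℕ) (p : Fin m → Polynomial ℝ), σ = ∑ i, (p i) ^ 2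

/-- there are no sums of squares `σ₀, σ₁ ∈ ℝ[t]` with
`1 - t = σ₀ + (1 - t)³ σ₁`. -/
theorem no_sos_certificate_for_cube :
    ¬ ∃ σ0 σ1 : Polynomial ℝ, IsSumOfSquares σ0 ∧ IsSumOfSquares σ1 ∧
      (1 - Polynomial.X : Polynomial ℝ) = σ0 + (1 - Polynomial.X) ^ 3 * σ1 := by
  rintro ⟨σ0, σ1, ⟨m, p, rfl⟩, -, h⟩
  have h1 := congrArg (Polynomial.eval 1) h
  simp only [Polynomial.eval_sub, Polynomial.eval_one, Polynomial.eval_X, Polynomial.eval_add,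
    Polynomial.eval_finset_sum, Polynomial.eval_pow, Polynomial.eval_mul, sub_self] at h1
  have h2 : ∑ i, (Polynomial.eval 1 (p i)) ^ 2 = 0 := by
    simpa using h1.symm
  rw [Finset.sum_eq_zero_iff_of_nonneg (fun i _ => sq_nonneg _)] at h2
  have h3 : ∀ i, Polynomial.eval 1 (p i) = 0 := fun i => by
    simpa using h2 i (Finset.mem_univ i)
  have h4 := congrArg (fun q => Polynomial.eval 1 (Polynomial.derivative q)) h
  simp [Polynomial.derivative_pow, Polynomial.eval_finset_sum, h3] at h4
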